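/- Let K > 1 and let w ∈ (0,1) be the unique solution of μ(w) = (1/(2K))·log 2. For every t ≥ 1/w² − 1, writing r' = 1/√(1+t), one has η_K(t) > (1/16)·exp(2K·μ(r')) − 1/2 + c₁(t,K)·exp(−2K·μ(r')), where c₁(t,K) = 1/4 + 1/(4·exp(−4K·μ(r')) + 1); moreover c₁(t,K) > 9/20. -/

import Mathlib

open Set Filter

/-- Complete elliptic integral of the first kind. -/
noncomputable def ellK (r : ℝ) : ℝ :=
  ∫ θ in (0:ℝ)..(Real.pi / 2), (1 - r ^ 2 * Real.sin θ ^ 2) ^ (-(1/2) : ℝ)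

/-- The Grötzsch modulus μ(r) = (π/2)·𝒦'(r)/𝒦(r). -/
noncomputable def mu (r : ℝ) : ℝ :=
  Real.pi / 2 * ellK (Real.sqrt (1 - r ^ 2)) / ellK r

/-!
Gauss's integral `∫₀^∞ dx / √((x² + a²)(x² + b²))` is transformed by the substitution
`y = x - ab / x`, which gives both Landen transformations of `𝒦` and hence `μ(r₁) = 2 μ(r)` for
`r₁ = (1 - r') / (1 + r')`. Since `log (4 / r₁) < 2 log (4 / r)`, every Landen step at least doubles
`μ(r) - log (4 / r)`; that difference is bounded above, so it is negative.

If `μ(u) = K μ(r')` and `s² = u₂` is the second Landen iterate of `u`, then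
`1 / u² - 1 = F(s)` with `F(s) = (1 - s)⁴ / (8 s (1 + s²))` strictly decreasing on `(0, 1]`.
Applied to `u₂`, the bound on `μ` reads `s < 2q` with `q = exp (-2 μ(u))`, the hypothesis on `t`
says `2q ≤ 1`, and `F(2q)` is exactly the asserted lower bound.
-/

open MeasureTheory Real

section Substitution

variable {E : Type*} [NormedAddCommGroup E] [NormedSpace ℝ E]

lemma image_sub_div_Ioi {c : ℝ} (hc : 0 < c) : (fun x ↦ x - c / x) '' Ioi 0 = univ := by
  refine eq_univ_of_forall fun y ↦ ?_
  have hsqrt : |y| < √(y ^ 2 + 4 * c) := by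
    rw [← sqrt_sq_eq_abs]
    exact sqrt_lt_sqrt (sq_nonneg y) (by linarith)
  have hpos : 0 < (y + √(y ^ 2 + 4 * c)) / 2 := by linarith [neg_abs_le y]
  have hsq : √(y ^ 2 + 4 * c) ^ 2 = y ^ 2 + 4 * c := sq_sqrt (by positivity)
  refine ⟨_, hpos, ?_⟩
  dsimp only
  rw [sub_eq_iff_eq_add', ← sub_eq_iff_eq_add, eq_div_iff hpos.ne']
  linear_combination hsq / 4

theorem integral_comp_sub_div_Ioi {c : ℝ} (hc : 0 < c) (f : ℝ → E) :
    ∫ x in Ioi 0, (1 + c / x ^ 2) • f (x - c / x) = ∫ y, f y := by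
  have hderiv : ∀ x ∈ Ioi (0 : ℝ),
      HasDerivWithinAt (fun x ↦ x - c / x) (1 + c / x ^ 2) (Ioi 0) x := fun x hx ↦ by
    have h := (hasDerivAt_id x).sub ((hasDerivAt_inv hx.ne').const_mul c)
    exact (h.congr_deriv (by ring)).hasDerivWithinAt
  have hmono : MonotoneOn (fun x ↦ x - c / x) (Ioi 0) := fun x (hx : 0 < x) y _ hxy ↦ by
    dsimp only
    gcongr
  rw [← integral_image_eq_integral_deriv_smul_of_monotoneOn measurableSet_Ioi hderiv hmono,
    image_sub_div_Ioi hc, setIntegral_univ]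

lemma image_mul_tan_Ioo {b : ℝ} (hb : 0 < b) : (fun θ ↦ b * tan θ) '' Ioo 0 (π / 2) = Ioi 0 := by
  ext y
  constructor
  · rintro ⟨θ, hθ, rfl⟩
    exact mul_pos hb (tan_pos_of_pos_of_lt_pi_div_two hθ.1 hθ.2)
  · intro (hy : 0 < y)
    exact ⟨arctan (y / b), ⟨arctan_pos.2 (by positivity), arctan_lt_pi_div_two _⟩,
      by simp only [tan_arctan, mul_div_cancel₀ y hb.ne']⟩

lemma cos_pos_of_mem_Ioo_zero {θ : ℝ} (hθ : θ ∈ Ioo 0 (π / 2)) : 0 < cos θ :=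
  cos_pos_of_mem_Ioo ⟨by linarith [hθ.1, pi_pos], hθ.2⟩

theorem integral_comp_mul_tan_Ioo {b : ℝ} (hb : 0 < b) (f : ℝ → E) :
    ∫ θ in Ioo 0 (π / 2), (b / cos θ ^ 2) • f (b * tan θ) = ∫ x in Ioi 0, f x := by
  have hderiv : ∀ θ ∈ Ioo 0 (π / 2),
      HasDerivWithinAt (fun θ ↦ b * tan θ) (b / cos θ ^ 2) (Ioo 0 (π / 2)) θ := fun θ hθ ↦ by
    have h := (hasDerivAt_tan (cos_pos_of_mem_Ioo_zero hθ).ne').const_mul b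
    exact (h.congr_deriv (mul_one_div _ _)).hasDerivWithinAt
  have hmono : MonotoneOn (fun θ ↦ b * tan θ) (Ioo 0 (π / 2)) := fun x hx y hy hxy ↦
    mul_le_mul_of_nonneg_left (strictMonoOn_tan.monotoneOn
      (Ioo_subset_Ioo_left (by linarith [pi_pos]) hx)
      (Ioo_subset_Ioo_left (by linarith [pi_pos]) hy) hxy) hb.le
  rw [← integral_image_eq_integral_deriv_smul_of_monotoneOn measurableSet_Ioo hderiv hmono,
    image_mul_tan_Ioo hb]

end Substitution

section AgmIntegral

/-- The integrand `1 / √((x² + a²)(x² + b²))` of Gauss's integral for the arithmetic-geometric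
mean, in its algebraic form on the half-line. -/
noncomputable def agmKernel (a b x : ℝ) : ℝ := (√((x ^ 2 + a ^ 2) * (x ^ 2 + b ^ 2)))⁻¹

/-- Gauss's integral `π / (2 M(a, b))`, where `M` is the arithmetic-geometric mean. -/
noncomputable def agmIntegral (a b : ℝ) : ℝ := ∫ x in Ioi 0, agmKernel a b x

lemma agmKernel_nonneg (a b x : ℝ) : 0 ≤ agmKernel a b x := inv_nonneg.2 (sqrt_nonneg _)

variable {a b : ℝ}

lemma agmKernel_mul_left (c a b x : ℝ) :
    agmKernel (c * a) (c * b) (c * x) = (c ^ 2)⁻¹ * agmKernel a b x := by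
  have hfactor : ((c * x) ^ 2 + (c * a) ^ 2) * ((c * x) ^ 2 + (c * b) ^ 2)
      = (c ^ 2) ^ 2 * ((x ^ 2 + a ^ 2) * (x ^ 2 + b ^ 2)) := by ring
  rw [agmKernel, agmKernel, hfactor, sqrt_mul (by positivity), sqrt_sq (sq_nonneg c), mul_inv]

lemma agmIntegral_mul_left {c : ℝ} (hc : 0 < c) (a b : ℝ) :
    agmIntegral (c * a) (c * b) = agmIntegral a b / c := by
  have h := integral_comp_mul_left_Ioi (agmKernel (c * a) (c * b)) 0 hc
  simp only [agmKernel_mul_left, integral_const_mul, mul_zero, smul_eq_mul] at h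
  rw [← agmIntegral, ← agmIntegral] at h
  field_simp at h ⊢
  linear_combination -h

lemma agmKernel_add_two_sqrt_comp_sub_div (hab : 0 < a * b) {x : ℝ} (hx : 0 < x) :
    (1 + a * b / x ^ 2) * agmKernel (a + b) (2 * √(a * b)) (x - a * b / x) = agmKernel a b x := by
  have hfactor : ((x - a * b / x) ^ 2 + (a + b) ^ 2) * ((x - a * b / x) ^ 2 + (2 * √(a * b)) ^ 2)
      = (1 + a * b / x ^ 2) ^ 2 * ((x ^ 2 + a ^ 2) * (x ^ 2 + b ^ 2)) := by
    rw [mul_pow, sq_sqrt (by positivity)]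
    field_simp
    ring
  rw [agmKernel, agmKernel, hfactor, sqrt_mul (by positivity), sqrt_sq (by positivity), mul_inv,
    mul_inv_cancel_left₀ (by positivity)]

theorem agmIntegral_add_two_sqrt (hab : 0 < a * b) :
    agmIntegral (a + b) (2 * √(a * b)) = agmIntegral a b / 2 := by
  have hline : ∫ y, agmKernel (a + b) (2 * √(a * b)) y
      = 2 * agmIntegral (a + b) (2 * √(a * b)) := by
    rw [agmIntegral, ← integral_comp_abs]
    simp only [agmKernel, sq_abs]
  have hsubst : agmIntegral a b = ∫ y, agmKernel (a + b) (2 * √(a * b)) y := by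
    rw [← integral_comp_sub_div_Ioi hab]
    exact setIntegral_congr_fun measurableSet_Ioi fun x hx ↦
      (agmKernel_add_two_sqrt_comp_sub_div hab hx).symm
  linarith

theorem agmIntegral_eq_integral_trig (a : ℝ) (hb : 0 < b) :
    agmIntegral a b = ∫ θ in Ioo 0 (π / 2), (√(a ^ 2 * cos θ ^ 2 + b ^ 2 * sin θ ^ 2))⁻¹ := by
  rw [agmIntegral, ← integral_comp_mul_tan_Ioo hb]
  refine setIntegral_congr_fun measurableSet_Ioo fun θ hθ ↦ ?_
  have hcos := cos_pos_of_mem_Ioo_zero hθ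
  have hfactor : ((b * tan θ) ^ 2 + a ^ 2) * ((b * tan θ) ^ 2 + b ^ 2)
      = (b / cos θ ^ 2) ^ 2 * (a ^ 2 * cos θ ^ 2 + b ^ 2 * sin θ ^ 2) := by
    rw [tan_eq_sin_div_cos]
    field_simp
    linear_combination
      (a ^ 2 * cos θ ^ 2 + b ^ 2 * sin θ ^ 2) * sin_sq_add_cos_sq θ
  simp only [smul_eq_mul]
  rw [agmKernel, hfactor, sqrt_mul (by positivity), sqrt_sq (by positivity), mul_inv,
    mul_inv_cancel_left₀ (by positivity)]

lemma continuous_agmKernel (ha : a ≠ 0) (hb : b ≠ 0) : Continuous (agmKernel a b) := by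
  unfold agmKernel
  refine Continuous.inv₀ (by fun_prop) fun x ↦ ?_
  positivity

lemma agmKernel_le_inv_mul {x u v : ℝ} (hu : 0 < u) (hv : 0 < v) (hua : u ^ 2 ≤ x ^ 2 + a ^ 2)
    (hvb : v ^ 2 ≤ x ^ 2 + b ^ 2) : agmKernel a b x ≤ (u * v)⁻¹ := by
  unfold agmKernel
  gcongr
  refine le_sqrt_of_sq_le ?_
  rw [mul_pow]
  gcongr

lemma agmKernel_le_rpow_neg_two (a b : ℝ) {x : ℝ} (hx : 0 < x) :
    agmKernel a b x ≤ x ^ (-2 : ℝ) := by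
  have h := agmKernel_le_inv_mul (a := a) (b := b) hx hx (le_add_of_nonneg_right (sq_nonneg a))
    (le_add_of_nonneg_right (sq_nonneg b))
  rwa [← sq, ← rpow_natCast, ← rpow_neg hx.le] at h

lemma integrableOn_agmKernel_Ioi (ha : a ≠ 0) (hb : b ≠ 0) {c : ℝ} (hc : 0 < c) :
    IntegrableOn (agmKernel a b) (Ioi c) := by
  refine Integrable.mono' (integrableOn_Ioi_rpow_of_lt (by norm_num : (-2 : ℝ) < -1) hc)
    (continuous_agmKernel ha hb).aestronglyMeasurable ?_
  filter_upwards [ae_restrict_mem measurableSet_Ioi] with x hx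
  rw [norm_of_nonneg (agmKernel_nonneg a b x)]
  exact agmKernel_le_rpow_neg_two a b (hc.trans hx)

lemma integral_agmKernel_Ioi_le (ha : a ≠ 0) (hb : b ≠ 0) {c : ℝ} (hc : 0 < c) :
    ∫ x in Ioi c, agmKernel a b x ≤ 1 / c := by
  have hrpow : IntegrableOn (fun x : ℝ ↦ x ^ (-2 : ℝ)) (Ioi c) :=
    integrableOn_Ioi_rpow_of_lt (by norm_num) hc
  calc ∫ x in Ioi c, agmKernel a b x ≤ ∫ x in Ioi c, x ^ (-2 : ℝ) :=
        setIntegral_mono_on (integrableOn_agmKernel_Ioi ha hb hc) hrpow measurableSet_Ioi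
          fun x hx ↦ agmKernel_le_rpow_neg_two a b (hc.trans hx)
    _ = 1 / c := by
        rw [integral_Ioi_rpow_of_lt (by norm_num) hc, one_div, ← rpow_neg_one]
        norm_num

lemma integral_agmKernel_zero_right_le (ha : 0 < a) (hb : 0 < b) :
    ∫ x in 0..b, agmKernel a b x ≤ 1 / a := by
  calc ∫ x in 0..b, agmKernel a b x ≤ ∫ _ in 0..b, (a * b)⁻¹ :=
        intervalIntegral.integral_mono_on hb.le
          ((continuous_agmKernel ha.ne' hb.ne').intervalIntegrable 0 b) intervalIntegrable_const
          fun x _ ↦ agmKernel_le_inv_mul ha hb (le_add_of_nonneg_left (sq_nonneg x))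
            (le_add_of_nonneg_left (sq_nonneg x))
    _ = 1 / a := by
        rw [intervalIntegral.integral_const, smul_eq_mul]
        field_simp
        ring

lemma integral_agmKernel_right_left_le (hb : 0 < b) (hba : b ≤ a) :
    ∫ x in b..a, agmKernel a b x ≤ log (a / b) / a := by
  have ha := hb.trans_le hba
  have hinv : IntervalIntegrable (fun x : ℝ ↦ a⁻¹ * x⁻¹) volume b a := by
    refine (intervalIntegral.intervalIntegrable_inv (fun x hx ↦ ?_) continuousOn_id).const_mul _
    rw [uIcc_of_le hba] at hx
    exact (hb.trans_le hx.1).ne'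
  calc ∫ x in b..a, agmKernel a b x ≤ ∫ x in b..a, a⁻¹ * x⁻¹ :=
        intervalIntegral.integral_mono_on hba
          ((continuous_agmKernel ha.ne' hb.ne').intervalIntegrable b a) hinv fun x hx ↦ by
            rw [← mul_inv]
            exact agmKernel_le_inv_mul ha (hb.trans_le hx.1) (le_add_of_nonneg_left (sq_nonneg x))
              (le_add_of_nonneg_right (sq_nonneg b))
    _ = log (a / b) / a := by
        rw [intervalIntegral.integral_const_mul, integral_inv_of_pos hb ha, inv_mul_eq_div]

theorem agmIntegral_le (hb : 0 < b) (hba : b ≤ a) : agmIntegral a b ≤ (2 + log (a / b)) / a := by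
  have ha := hb.trans_le hba
  have hcont := continuous_agmKernel ha.ne' hb.ne'
  have hsplit : agmIntegral a b = (∫ x in 0..b, agmKernel a b x) + (∫ x in b..a, agmKernel a b x)
      + ∫ x in Ioi a, agmKernel a b x := by
    rw [intervalIntegral.integral_add_adjacent_intervals (hcont.intervalIntegrable 0 b)
      (hcont.intervalIntegrable b a), agmIntegral, intervalIntegral.integral_interval_add_Ioi'
      (hcont.intervalIntegrable 0 a) (integrableOn_agmKernel_Ioi ha.ne' hb.ne' ha)]
  calc agmIntegral a b ≤ 1 / a + log (a / b) / a + 1 / a := by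
        rw [hsplit]
        gcongr
        · exact integral_agmKernel_zero_right_le ha hb
        · exact integral_agmKernel_right_left_le hb hba
        · exact integral_agmKernel_Ioi_le ha.ne' hb.ne' ha
    _ = (2 + log (a / b)) / a := by ring

end AgmIntegral

section CompleteEllipticIntegral

variable {r s p : ℝ}

lemma one_sub_mul_sin_sq_pos (hr : r ^ 2 < 1) (θ : ℝ) : 0 < 1 - r ^ 2 * sin θ ^ 2 := by
  nlinarith [sin_sq_le_one θ, sq_nonneg (sin θ), sq_nonneg r]

lemma intervalIntegrable_ellK_integrand (hr : r ^ 2 < 1) (a b : ℝ) :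
    IntervalIntegrable (fun θ ↦ (1 - r ^ 2 * sin θ ^ 2) ^ (-(1 / 2) : ℝ)) volume a b :=
  (Continuous.rpow_const (by fun_prop) fun θ ↦
    Or.inl (one_sub_mul_sin_sq_pos hr θ).ne').intervalIntegrable a b

lemma ellK_le_ellK (hrs : r ^ 2 ≤ s ^ 2) (hs : s ^ 2 < 1) : ellK r ≤ ellK s := by
  refine intervalIntegral.integral_mono_on (by positivity)
    (intervalIntegrable_ellK_integrand (hrs.trans_lt hs) _ _)
    (intervalIntegrable_ellK_integrand hs _ _) fun θ _ ↦ ?_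
  refine rpow_le_rpow_of_nonpos (one_sub_mul_sin_sq_pos hs θ) ?_ (by norm_num)
  gcongr

lemma ellK_zero : ellK 0 = π / 2 := by simp [ellK]

lemma pi_div_two_le_ellK (hr : r ^ 2 < 1) : π / 2 ≤ ellK r :=
  ellK_zero ▸ ellK_le_ellK (by rw [zero_pow two_ne_zero]; exact sq_nonneg r) hr

lemma ellK_pos (hr : r ^ 2 < 1) : 0 < ellK r := pi_div_two_pos.trans_le (pi_div_two_le_ellK hr)

lemma continuousOn_ellK : ContinuousOn ellK (Ioo (-1) 1) := by
  rw [continuousOn_iff_continuous_domRestrict]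
  refine intervalIntegral.continuous_parametric_intervalIntegral_of_continuous'
    (f := fun (r : Ioo (-1 : ℝ) 1) θ ↦ (1 - (r : ℝ) ^ 2 * sin θ ^ 2) ^ (-(1 / 2) : ℝ)) ?_ _ _
  refine Continuous.rpow_const (by fun_prop) fun ⟨r, θ⟩ ↦ Or.inl ?_
  exact (one_sub_mul_sin_sq_pos ((sq_lt_one_iff_abs_lt_one _).2 (abs_lt.2 r.2)) θ).ne'

theorem ellK_eq_agmIntegral {b : ℝ} (hb : 0 < b) (h : r ^ 2 + b ^ 2 = 1) :
    ellK r = agmIntegral 1 b := by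
  rw [agmIntegral_eq_integral_trig 1 hb, ellK, intervalIntegral.integral_of_le pi_div_two_pos.le,
    integral_Ioc_eq_integral_Ioo]
  refine setIntegral_congr_fun measurableSet_Ioo fun θ _ ↦ ?_
  have hradicand : 1 ^ 2 * cos θ ^ 2 + b ^ 2 * sin θ ^ 2 = 1 - r ^ 2 * sin θ ^ 2 := by
    linear_combination sin_sq_add_cos_sq θ + sin θ ^ 2 * h
  have hr : r ^ 2 < 1 := by linarith [pow_pos hb 2]
  rw [hradicand, rpow_neg (one_sub_mul_sin_sq_pos hr θ).le, ← sqrt_eq_rpow]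

theorem ellK_descending_landen (hp : 0 < p) (hp1 : p ≤ 1) :
    ellK ((1 - p) / (1 + p)) = (1 + p) / 2 * ellK √(1 - p ^ 2) := by
  have hp2 : p ^ 2 ≤ 1 := pow_le_one₀ hp.le hp1
  rw [ellK_eq_agmIntegral (b := 2 * √p / (1 + p)) (by positivity),
    ellK_eq_agmIntegral hp (by rw [sq_sqrt (by linarith)]; ring)]
  · have hscale := agmIntegral_mul_left (c := 1 + p) (by positivity) 1 (2 * √p / (1 + p))
    have hagm := agmIntegral_add_two_sqrt (a := 1) (b := p) (by linarith)
    rw [mul_one, mul_div_cancel₀ _ (by positivity)] at hscale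
    rw [one_mul, hscale, div_eq_iff (by positivity)] at hagm
    rw [hagm]
    ring
  · field_simp
    rw [sq_sqrt hp.le]
    ring

theorem ellK_ascending_landen (hp : 0 ≤ p) (hp1 : p < 1) :
    ellK (2 * √p / (1 + p)) = (1 + p) * ellK p := by
  have hp2 : 0 < 1 - p ^ 2 := by nlinarith
  rw [ellK_eq_agmIntegral (b := (1 - p) / (1 + p)) (div_pos (by linarith) (by linarith)),
    ellK_eq_agmIntegral (sqrt_pos.2 hp2) (by rw [sq_sqrt hp2.le]; ring)]
  · have hscale := agmIntegral_mul_left (c := 1 + p) (by positivity) 1 ((1 - p) / (1 + p))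
    have hscale_two := agmIntegral_mul_left two_pos 1 √(1 - p ^ 2)
    have hagm := agmIntegral_add_two_sqrt (a := 1 + p) (b := 1 - p) (by nlinarith)
    rw [mul_one, mul_div_cancel₀ _ (by positivity)] at hscale
    rw [show 1 + p + (1 - p) = 2 * 1 by ring, show (1 + p) * (1 - p) = 1 - p ^ 2 by ring,
      hscale_two, hscale] at hagm
    field_simp at hagm
    linarith
  · field_simp
    rw [sq_sqrt hp]
    ring

end CompleteEllipticIntegral

section GrotzschModulus

variable {r : ℝ}

lemma sq_lt_one_of_mem_Ioo (hr : r ∈ Ioo 0 1) : r ^ 2 < 1 :=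
  pow_lt_one₀ hr.1.le hr.2 two_ne_zero

lemma sqrt_one_sub_sq_mem_Ioo (hr : r ∈ Ioo 0 1) : √(1 - r ^ 2) ∈ Ioo 0 1 :=
  ⟨sqrt_pos.2 (by linarith [sq_lt_one_of_mem_Ioo hr]),
    (sqrt_lt' one_pos).2 (by linarith [pow_pos hr.1 2])⟩

lemma sqrt_one_sub_sqrt_one_sub_sq_sq (hr : r ∈ Ioo 0 1) : √(1 - √(1 - r ^ 2) ^ 2) = r := by
  rw [sq_sqrt (by linarith [sq_lt_one_of_mem_Ioo hr]), sub_sub_cancel, sqrt_sq hr.1.le]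

lemma ellK_pos_of_mem_Ioo (hr : r ∈ Ioo 0 1) : 0 < ellK r := ellK_pos (sq_lt_one_of_mem_Ioo hr)

lemma mu_pos (hr : r ∈ Ioo 0 1) : 0 < mu r := by
  have hK := ellK_pos_of_mem_Ioo hr
  have hK' := ellK_pos_of_mem_Ioo (sqrt_one_sub_sq_mem_Ioo hr)
  unfold mu
  positivity

lemma antitoneOn_mu : AntitoneOn mu (Ioo 0 1) := fun r hr s hs hrs ↦ by
  have hr0 := hr.1
  have hK := ellK_pos_of_mem_Ioo hr
  have hr' := sq_lt_one_of_mem_Ioo (sqrt_one_sub_sq_mem_Ioo hr)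
  unfold mu
  gcongr ?_ * ?_ / ?_
  · exact mul_nonneg pi_div_two_pos.le (ellK_pos hr').le
  · exact ellK_le_ellK (by gcongr) hr'
  · exact ellK_le_ellK (by gcongr) (sq_lt_one_of_mem_Ioo hs)

lemma continuousOn_mu : ContinuousOn mu (Ioo 0 1) := by
  have hsub : Ioo (0 : ℝ) 1 ⊆ Ioo (-1) 1 := Ioo_subset_Ioo_left (by norm_num)
  refine ContinuousOn.div (continuousOn_const.mul (continuousOn_ellK.comp (by fun_prop)
    fun r hr ↦ hsub (sqrt_one_sub_sq_mem_Ioo hr))) (continuousOn_ellK.mono hsub)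
    fun r hr ↦ (ellK_pos_of_mem_Ioo hr).ne'

lemma mu_mul_mu_sqrt_one_sub_sq (hr : r ∈ Ioo 0 1) : mu r * mu √(1 - r ^ 2) = (π / 2) ^ 2 := by
  have hK := ellK_pos_of_mem_Ioo hr
  have hK' := ellK_pos_of_mem_Ioo (sqrt_one_sub_sq_mem_Ioo hr)
  rw [mu, mu, sqrt_one_sub_sqrt_one_sub_sq_sq hr]
  field_simp

lemma mu_le_two_add_log (hr : r ∈ Ioo 0 1) : mu r ≤ 2 + log (1 / r) := by
  have hK := ellK_pos_of_mem_Ioo hr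
  have hK'_eq : ellK √(1 - r ^ 2) = agmIntegral 1 r :=
    ellK_eq_agmIntegral hr.1 (by rw [sq_sqrt (by linarith [sq_lt_one_of_mem_Ioo hr])]; ring)
  have hK'_pos := ellK_pos_of_mem_Ioo (sqrt_one_sub_sq_mem_Ioo hr)
  calc mu r ≤ ellK r * ellK √(1 - r ^ 2) / ellK r := by
        unfold mu
        gcongr
        exact pi_div_two_le_ellK (sq_lt_one_of_mem_Ioo hr)
    _ = agmIntegral 1 r := by rw [mul_div_cancel_left₀ _ hK.ne', hK'_eq]
    _ ≤ 2 + log (1 / r) := by simpa only [div_one] using agmIntegral_le hr.1 hr.2.le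

end GrotzschModulus

section LandenTransformation

variable {r : ℝ}

/-- The descending Landen transform `r ↦ (1 - r') / (1 + r')` of moduli, where `r' = √(1 - r²)`. -/
noncomputable def landen (r : ℝ) : ℝ := (1 - √(1 - r ^ 2)) / (1 + √(1 - r ^ 2))

lemma landen_mem_Ioo (hr : r ∈ Ioo 0 1) : landen r ∈ Ioo 0 1 := by
  obtain ⟨hpos, hlt⟩ := sqrt_one_sub_sq_mem_Ioo hr
  exact ⟨div_pos (by linarith) (by linarith), (div_lt_one (by linarith)).2 (by linarith)⟩

lemma sq_mul_one_add_landen_sq (hr : r ^ 2 ≤ 1) : r ^ 2 * (1 + landen r) ^ 2 = 4 * landen r := by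
  have hsq : √(1 - r ^ 2) ^ 2 = 1 - r ^ 2 := sq_sqrt (by linarith)
  unfold landen
  field_simp
  linear_combination 4 * hsq

theorem mu_landen (hr : r ∈ Ioo 0 1) : mu (landen r) = 2 * mu r := by
  obtain ⟨hpos, hlt⟩ := sqrt_one_sub_sq_mem_Ioo hr
  have hK := ellK_pos_of_mem_Ioo hr
  have hcompl : √(1 - landen r ^ 2) = 2 * √√(1 - r ^ 2) / (1 + √(1 - r ^ 2)) := by
    have hsq : √√(1 - r ^ 2) ^ 2 = √(1 - r ^ 2) := sq_sqrt hpos.le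
    rw [sqrt_eq_iff_mul_self_eq_of_pos (by positivity), landen]
    field_simp
    linear_combination 4 * hsq
  rw [mu, hcompl, ellK_ascending_landen hpos.le hlt, landen, ellK_descending_landen hpos hlt.le,
    sqrt_one_sub_sqrt_one_sub_sq_sq hr, mu]
  field_simp

lemma mu_landen_iterate (hr : r ∈ Ioo 0 1) (n : ℕ) :
    landen^[n] r ∈ Ioo 0 1 ∧ mu (landen^[n] r) = 2 ^ n * mu r := by
  induction n with
  | zero => simpa using hr
  | succ n ih =>
    rw [Function.iterate_succ_apply', mu_landen ih.1, ih.2]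
    exact ⟨landen_mem_Ioo ih.1, by ring⟩

lemma log_four_div_landen_lt (hr : r ∈ Ioo 0 1) : log (4 / landen r) < 2 * log (4 / r) := by
  have hr0 := hr.1
  have hl0 := (landen_mem_Ioo hr).1
  have hlt : r ^ 2 < 4 * landen r :=
    calc r ^ 2 < r ^ 2 * (1 + landen r) ^ 2 :=
          lt_mul_of_one_lt_right (by positivity) (one_lt_pow₀ (by linarith) two_ne_zero)
      _ = 4 * landen r := sq_mul_one_add_landen_sq (sq_lt_one_of_mem_Ioo hr).le
  have hlog : 2 * log (4 / r) = log ((4 / r) ^ 2) := by rw [log_pow, Nat.cast_two]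
  rw [hlog]
  refine log_lt_log (by positivity) ?_
  rw [div_pow, div_lt_div_iff₀ hl0 (by positivity)]
  linarith

end LandenTransformation

section UpperBound

variable {r : ℝ}

lemma log_four_div_landen_iterate_le (hr : r ∈ Ioo 0 1) (n : ℕ) :
    log (4 / landen^[n] r) ≤ 2 ^ n * log (4 / r) := by
  induction n with
  | zero => simp
  | succ n ih =>
    calc log (4 / landen^[n + 1] r) ≤ 2 * log (4 / landen^[n] r) := by
          rw [Function.iterate_succ_apply']
          exact (log_four_div_landen_lt (mu_landen_iterate hr n).1).le
      _ ≤ 2 * (2 ^ n * log (4 / r)) := by gcongr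
      _ = 2 ^ (n + 1) * log (4 / r) := by ring

-- Each Landen step at least doubles the excess `mu r - log (4 / r)`, which is bounded above.
lemma mu_le_log_four_div (hr : r ∈ Ioo 0 1) : mu r ≤ log (4 / r) := by
  by_contra! hlt
  obtain ⟨n, hn⟩ := pow_unbounded_of_one_lt (2 / (mu r - log (4 / r))) one_lt_two
  rw [div_lt_iff₀ (sub_pos.2 hlt)] at hn
  obtain ⟨hmem, hmu⟩ := mu_landen_iterate hr n
  have hbound := mu_le_two_add_log hmem
  have hlog : log (1 / landen^[n] r) ≤ log (4 / landen^[n] r) := by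
    have := hmem.1
    gcongr
    norm_num
  linarith [log_four_div_landen_iterate_le hr n]

theorem mu_lt_log_four_div (hr : r ∈ Ioo 0 1) : mu r < log (4 / r) := by
  have h := mu_le_log_four_div (landen_mem_Ioo hr)
  rw [mu_landen hr] at h
  linarith [log_four_div_landen_lt hr]

lemma lt_four_mul_exp_neg_mu (hr : r ∈ Ioo 0 1) : r < 4 * exp (-mu r) := by
  have h := mu_lt_log_four_div hr
  rw [lt_log_iff_exp_lt (div_pos four_pos hr.1), lt_div_iff₀' hr.1] at h
  rwa [exp_neg, ← div_eq_mul_inv, lt_div_iff₀ (exp_pos _)]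

end UpperBound

section Surjectivity

lemma exists_le_mu (M : ℝ) : ∃ r ∈ Ioo 0 1, M ≤ mu r := by
  have hr : (1 / 2 : ℝ) ∈ Ioo 0 1 := by norm_num
  obtain ⟨n, hn⟩ := pow_unbounded_of_one_lt (M / mu (1 / 2)) one_lt_two
  obtain ⟨hmem, hmu⟩ := mu_landen_iterate hr n
  exact ⟨_, hmem, hmu ▸ ((div_lt_iff₀ (mu_pos hr)).1 hn).le⟩

lemma exists_mu_le {ε : ℝ} (hε : 0 < ε) : ∃ r ∈ Ioo 0 1, mu r ≤ ε := by
  obtain ⟨r, hr, hle⟩ := exists_le_mu ((π / 2) ^ 2 / ε)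
  refine ⟨_, sqrt_one_sub_sq_mem_Ioo hr, ?_⟩
  rw [← mu_mul_mu_sqrt_one_sub_sq hr, div_le_iff₀ hε] at hle
  exact le_of_mul_le_mul_left hle (mu_pos hr)

theorem surjOn_mu : SurjOn mu (Ioo 0 1) (Ioi 0) := fun y hy ↦ by
  obtain ⟨r, hr, hry⟩ := exists_mu_le hy
  obtain ⟨s, hs, hys⟩ := exists_le_mu y
  exact isPreconnected_Ioo.intermediate_value hr hs continuousOn_mu ⟨hry, hys⟩

end Surjectivity

section DistortionFunction

/-- The quantity `1 / r² - 1`, of which `η_K` is a value, expressed through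
`s = √(landen (landen r))`. -/
noncomputable def landenDistortion (s : ℝ) : ℝ := (1 - s) ^ 4 / (8 * s * (1 + s ^ 2))

lemma strictAntiOn_landenDistortion : StrictAntiOn landenDistortion (Ioc 0 1) :=
  fun s ⟨hs, _⟩ t ⟨_, ht⟩ hst ↦ by
    have hnum : (1 - t) ^ 4 < (1 - s) ^ 4 :=
      pow_lt_pow_left₀ (by linarith) (by linarith) four_ne_zero
    have hden : 8 * s * (1 + s ^ 2) ≤ 8 * t * (1 + t ^ 2) := by
      have := hs.trans hst
      gcongr
    exact div_lt_div₀ hnum hden (by positivity) (by positivity)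

lemma exp_neg_le_half {x : ℝ} (hx : log 2 ≤ x) : exp (-x) ≤ 1 / 2 := by
  rw [exp_neg, one_div, inv_le_inv₀ (exp_pos x) two_pos]
  exact (log_le_iff_le_exp two_pos).1 hx

lemma landenDistortion_two_mul {q : ℝ} (hq : q ≠ 0) :
    landenDistortion (2 * q) =
      1 / 16 * q⁻¹ - 1 / 2 + (1 / 4 + 1 / (4 * q ^ 2 + 1)) * q := by
  have h : 1 + (2 * q) ^ 2 = 4 * q ^ 2 + 1 := by ring
  rw [landenDistortion, h]
  field_simp
  ring

variable {r : ℝ}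

lemma one_div_sq_sub_one_eq_landen (hr : r ∈ Ioo 0 1) :
    1 / r ^ 2 - 1 = (1 - landen r) ^ 2 / (4 * landen r) := by
  have hl := (landen_mem_Ioo hr).1
  have hr0 := hr.1
  field_simp
  linear_combination -sq_mul_one_add_landen_sq (sq_lt_one_of_mem_Ioo hr).le

lemma one_div_sq_sub_one_eq_landenDistortion (hr : r ∈ Ioo 0 1) :
    1 / r ^ 2 - 1 = landenDistortion √(landen (landen r)) := by
  have hl := landen_mem_Ioo hr
  have hl0 := hl.1
  set s := √(landen (landen r))
  have hs : 0 < s := sqrt_pos.2 (landen_mem_Ioo hl).1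
  have hs_sq : s ^ 2 = landen (landen r) := sq_sqrt (landen_mem_Ioo hl).1.le
  have hl_eq : landen r = 2 * s / (1 + s ^ 2) := by
    rw [eq_div_iff (by positivity), ← sq_eq_sq₀ (by positivity) (by positivity), mul_pow, hs_sq,
      sq_mul_one_add_landen_sq (sq_lt_one_of_mem_Ioo hl).le, ← hs_sq]
    ring
  rw [one_div_sq_sub_one_eq_landen hr, hl_eq, landenDistortion]
  field_simp
  ring

lemma sqrt_landen_landen_lt (hr : r ∈ Ioo 0 1) :
    √(landen (landen r)) < 2 * exp (-(2 * mu r)) := by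
  have hl := landen_mem_Ioo hr
  have h := lt_four_mul_exp_neg_mu (landen_mem_Ioo hl)
  rw [mu_landen hl, mu_landen hr] at h
  rw [sqrt_lt' (by positivity), mul_pow, ← exp_nat_mul]
  convert h using 2
  · norm_num
  · push_cast
    ring_nf

theorem landenDistortion_two_mul_exp_lt (hr : r ∈ Ioo 0 1) (hmu : log 2 ≤ 2 * mu r) :
    landenDistortion (2 * exp (-(2 * mu r))) < 1 / r ^ 2 - 1 := by
  have hexp : 2 * exp (-(2 * mu r)) ≤ 1 := by linarith [exp_neg_le_half hmu]
  have hlt := sqrt_landen_landen_lt hr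
  have hpos : 0 < √(landen (landen r)) := sqrt_pos.2 (landen_mem_Ioo (landen_mem_Ioo hr)).1
  rw [one_div_sq_sub_one_eq_landenDistortion hr]
  exact strictAntiOn_landenDistortion ⟨hpos, (hlt.trans_le hexp).le⟩ ⟨by positivity, hexp⟩ hlt

end DistortionFunction

lemma one_div_sqrt_one_add_mem_Ioo {t : ℝ} (ht : 0 < t) : 1 / √(1 + t) ∈ Ioo 0 1 := by
  have hlt : 1 < √(1 + t) := by rw [lt_sqrt zero_le_one]; linarith
  exact ⟨by positivity, (div_lt_one (by positivity)).2 hlt⟩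

lemma one_div_sqrt_one_add_le {t w : ℝ} (hw : 0 < w) (ht : 1 / w ^ 2 - 1 ≤ t) :
    1 / √(1 + t) ≤ w := by
  have hle : (1 / w) ^ 2 ≤ 1 + t := by rw [one_div_pow]; linarith
  exact (one_div_le (sqrt_pos.2 ((by positivity : 0 < (1 / w) ^ 2).trans_le hle)) hw).2
    (le_sqrt_of_sq_le hle)

lemma nine_div_twenty_lt {q : ℝ} (hq : 0 ≤ q) (hq_le : q ≤ 1 / 2) :
    9 / 20 < 1 / 4 + 1 / (4 * q ^ 2 + 1) := by
  have hden : 4 * q ^ 2 + 1 ≤ 2 := by nlinarith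
  linarith [one_div_le_one_div_of_le (by positivity) hden]

theorem stmt_15_general (eta : ℝ → ℝ → ℝ)
    (heta : ∀ K t : ℝ, 0 < K → 0 < t → ∀ u ∈ Ioo (0 : ℝ) 1,
      mu u = K * mu (1 / √(1 + t)) → eta K t = 1 / u ^ 2 - 1) (K w : ℝ) (hK : 0 < K)
    (hw : w ∈ Ioo (0 : ℝ) 1) (hmuw : mu w = 1 / (2 * K) * log 2) (t : ℝ)
    (ht : 1 / w ^ 2 - 1 ≤ t) :
    1 / 16 * exp (2 * K * mu (1 / √(1 + t))) - 1 / 2 +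
        (1 / 4 + 1 / (4 * exp (-(4 * K * mu (1 / √(1 + t)))) + 1)) *
          exp (-(2 * K * mu (1 / √(1 + t)))) < eta K t ∧
      9 / 20 < 1 / 4 + 1 / (4 * exp (-(4 * K * mu (1 / √(1 + t)))) + 1) := by
  have hw_sq : 1 < 1 / w ^ 2 := one_lt_one_div (pow_pos hw.1 2) (sq_lt_one_of_mem_Ioo hw)
  have ht0 : 0 < t := (sub_pos.2 hw_sq).trans_le ht
  have hr := one_div_sqrt_one_add_mem_Ioo ht0
  obtain ⟨u, hu, hmuu⟩ := surjOn_mu (mul_pos hK (mu_pos hr))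
  have hlog : log 2 ≤ 2 * mu u := by
    have hmono := antitoneOn_mu hr hw (one_div_sqrt_one_add_le hw.1 ht)
    rw [hmuw, one_div_mul_eq_div, div_le_iff₀ (by positivity)] at hmono
    linarith
  have hlt := landenDistortion_two_mul_exp_lt hu hlog
  have hq_sq : exp (-(4 * K * mu (1 / √(1 + t)))) = exp (-(2 * mu u)) ^ 2 := by
    rw [← exp_nat_mul, hmuu]
    push_cast
    ring_nf
  rw [landenDistortion_two_mul (exp_ne_zero _), ← exp_neg, neg_neg] at hlt
  rw [heta K t hK ht0 u hu hmuu, mul_assoc 2 K, ← hmuu, hq_sq]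
  exact ⟨hlt, nine_div_twenty_lt (exp_pos _).le (exp_neg_le_half hlog)⟩

theorem stmt_15 (eta : ℝ → ℝ → ℝ)
    (heta : ∀ K t : ℝ, 0 < K → 0 < t → ∀ u ∈ Set.Ioo (0:ℝ) 1,
      mu u = K * mu (1 / Real.sqrt (1 + t)) → eta K t = 1 / u ^ 2 - 1) (K w : ℝ) (hK : 1 < K)
    (hw : w ∈ Set.Ioo (0:ℝ) 1) (hmuw : mu w = 1 / (2 * K) * Real.log 2) :
    ∀ t : ℝ, 1 / w ^ 2 - 1 ≤ t →
      1 / 16 * Real.exp (2 * K * mu (1 / Real.sqrt (1 + t))) - 1 / 2 +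
        (1 / 4 + 1 / (4 * Real.exp (-(4 * K * mu (1 / Real.sqrt (1 + t)))) + 1)) *
          Real.exp (-(2 * K * mu (1 / Real.sqrt (1 + t)))) < eta K t ∧
      9 / 20 < 1 / 4 + 1 / (4 * Real.exp (-(4 * K * mu (1 / Real.sqrt (1 + t)))) + 1) :=
  stmt_15_general eta heta K w (zero_lt_one.trans hK) hw hmuw
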